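/- (Lemma 4.1) Fix an integer d ≥ 1, m > 0 and x ∈ ℝ^d. The family of probability measures {W_{x,a} : 0 < a < 1} on Γ̃(x) is tight: for every η > 0 there exists a compact set K ⊆ Γ̃(x) such that W_{x,a}(Γ̃(x) ∖ K) < η for all 0 < a < 1. -/

import Mathlib

open MeasureTheory Filter Topology Real Set
open scoped RealInnerProductSpace ENNReal unitInterval

noncomputable section

/-- `ℝ^d` as a Euclidean space. -/
abbrev Ed (d : ℕ) := EuclideanSpace ℝ (Fin d)

/-- The space of continuous paths `[0,1] → ℝ^d`, with the uniform metric. -/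
abbrev PathSp (d : ℕ) := C(unitInterval, Ed d)

instance (d : ℕ) : MeasurableSpace (PathSp d) := borel _
instance (d : ℕ) : BorelSpace (PathSp d) := ⟨rfl⟩

/-- Evaluation of a path at a real time, clamped to `[0,1]`. -/
def evalAt {d : ℕ} (ω : PathSp d) (t : ℝ) : Ed d := ω (Set.projIcc 0 1 zero_le_one t)

/-- `Ω(x)`: continuous paths starting at `x`. -/
abbrev Omega1 {d : ℕ} (x : Ed d) := {ω : PathSp d // ω 0 = x}

/-- `Ω(x,y)`: continuous paths from `x` to `y`. -/
abbrev Omega2 {d : ℕ} (x y : Ed d) := {ω : PathSp d // ω 0 = x ∧ ω 1 = y}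

/-- clamp a real number to `[0,1]`. -/
def clamp01 (r : ℝ) : ℝ := min 1 (max 0 r)

lemma clamp01_of_nonpos {r : ℝ} (h : r ≤ 0) : clamp01 r = 0 := by
  rw [clamp01, max_eq_left h, min_eq_right zero_le_one]

lemma clamp01_of_one_le {r : ℝ} (h : 1 ≤ r) : clamp01 r = 1 := by
  rw [clamp01, max_eq_right (zero_le_one.trans h), min_eq_left h]

lemma clamp01_continuous : Continuous clamp01 :=
  continuous_const.min (continuous_const.max continuous_id)

/-- The piecewise linear path starting at `x` with `N` steps given by the increments `v i`,
the `i`-th step being linearly parametrized by `[i/N, (i+1)/N]`. -/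
def pwLinE {d : ℕ} (x : Ed d) (N : ℕ) (v : Fin N → Ed d) : PathSp d :=
  ⟨fun t => x + ∑ i : Fin N, clamp01 ((N : ℝ) * (t : ℝ) - ((i : ℕ) : ℝ)) • v i, by
    refine continuous_const.add (continuous_finset_sum _ fun i _ => ?_)
    exact ((clamp01_continuous.comp
      ((continuous_const.mul continuous_subtype_val).sub continuous_const)).smul
      continuous_const)⟩

lemma pwLinE_zero {d : ℕ} (x : Ed d) (N : ℕ) (v : Fin N → Ed d) :
    pwLinE x N v 0 = x := by
  show x + ∑ i : Fin N, clamp01 ((N : ℝ) * ((0 : unitInterval) : ℝ) - ((i : ℕ) : ℝ)) • v i = x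
  have h : ∀ i : Fin N, clamp01 ((N : ℝ) * ((0 : unitInterval) : ℝ) - ((i : ℕ) : ℝ)) = 0 := by
    intro i
    apply clamp01_of_nonpos
    have h0 : ((0 : unitInterval) : ℝ) = 0 := rfl
    rw [h0, mul_zero, zero_sub]
    exact neg_nonpos.mpr (Nat.cast_nonneg (i : ℕ))
  simp only [h, zero_smul, Finset.sum_const_zero, add_zero]

lemma pwLinE_one {d : ℕ} (x : Ed d) (N : ℕ) (v : Fin N → Ed d) :
    pwLinE x N v 1 = x + ∑ i : Fin N, v i := by
  show x + ∑ i : Fin N, clamp01 ((N : ℝ) * ((1 : unitInterval) : ℝ) - ((i : ℕ) : ℝ)) • v i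
      = x + ∑ i : Fin N, v i
  have h : ∀ i : Fin N, clamp01 ((N : ℝ) * ((1 : unitInterval) : ℝ) - ((i : ℕ) : ℝ)) = 1 := by
    intro i
    apply clamp01_of_one_le
    have h1 : ((1 : unitInterval) : ℝ) = 1 := rfl
    have h2 : ((i : ℕ) : ℝ) + 1 ≤ (N : ℝ) := by
      exact_mod_cast Nat.succ_le_of_lt i.isLt
    rw [h1, mul_one]; linarith
  simp only [h, one_smul]

/-- Piecewise linear element of `Ω(x)` with increments `v`. -/
def pwLin1 {d : ℕ} (x : Ed d) (N : ℕ) (v : Fin N → Ed d) : Omega1 x :=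
  ⟨pwLinE x N v, pwLinE_zero x N v⟩

/-- Piecewise linear element of `Ω(x,y)` with increments `v` summing to `y - x`. -/
def pwLin2 {d : ℕ} (x y : Ed d) (N : ℕ) (v : Fin N → Ed d)
    (h : x + ∑ i : Fin N, v i = y) : Omega2 x y :=
  ⟨pwLinE x N v, pwLinE_zero x N v, by rw [pwLinE_one, h]⟩

/-- the point preceding `x_i` in the list `x, x_1, …, x_N`. -/
def prevPt {d : ℕ} (x : Ed d) {N : ℕ} (xs : Fin N → Ed d) (i : Fin N) : Ed d :=
  if (i : ℕ) = 0 then x else xs ⟨(i : ℕ) - 1, lt_of_le_of_lt (Nat.pred_le _) i.isLt⟩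

/-- The discrete measure `W_{x,a,N}`, i.e. the measure
`∏_{i=1}^N (2πa²)^{-d/2} exp(-|x_i - x_{i-1}|²/(2a²)) dx_1 … dx_N` (with `x_0 = x`)
on `N`-step piecewise linear paths, placed on `{a²N} × Ω(x) ⊆ ℝ × Ω(x)`.
For `N = 0` this is the Dirac measure at `(0, constant path at x)`. -/
def WxaN {d : ℕ} (x : Ed d) (a : ℝ) (N : ℕ) : Measure (ℝ × Omega1 x) :=
  Measure.map
    (fun xs : Fin N → Ed d =>
      ((a ^ 2 * N : ℝ), pwLin1 x N fun i => xs i - prevPt x xs i))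
    (volume.withDensity fun xs : Fin N → Ed d =>
      ENNReal.ofReal (∏ i : Fin N,
        (2 * π * a ^ 2) ^ (-(d : ℝ) / 2) *
          Real.exp (-‖xs i - prevPt x xs i‖ ^ 2 / (2 * a ^ 2))))

/-- The approximating probability measure
`W_{x,a} = (1 - e^{-m²a²/2}) Σ_{N=0}^∞ e^{-m²a²N/2} W_{x,a,N}`. -/
def Wxa {d : ℕ} (x : Ed d) (m a : ℝ) : Measure (ℝ × Omega1 x) :=
  ENNReal.ofReal (1 - Real.exp (-m ^ 2 * a ^ 2 / 2)) •
    Measure.sum fun N : ℕ =>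
      ENNReal.ofReal (Real.exp (-m ^ 2 * a ^ 2 * N / 2)) • WxaN x a N

/-- The lattice step of length `a` in direction `p.1`, forwards or backwards
according to `p.2`. -/
def stepVec {d : ℕ} (a : ℝ) (p : Fin d × Bool) : Ed d :=
  (if p.2 then a else -a) • EuclideanSpace.single p.1 (1 : ℝ)

/-- The normalized counting measure `V'_{x,a,N}` giving mass `(2d)^{-N}` to each
(piecewise linearly parametrized) `N`-step nearest-neighbour lattice path in `x + aℤ^d`
starting at `x`.  For `N = 0` it is the Dirac measure at the constant path. -/
def VxaN {d : ℕ} (x : Ed d) (a : ℝ) (N : ℕ) : Measure (Omega1 x) :=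
  Measure.sum fun s : Fin N → Fin d × Bool =>
    (((2 * d : ℕ) : ℝ≥0∞) ^ N)⁻¹ •
      Measure.dirac (pwLin1 x N fun i => stepVec a (s i))

/-- The approximating probability measure
`V'_{x,a} = (1 - e^{-m²a²/(2d)}) Σ_{N=0}^∞ e^{-m²a²N/(2d)} V'_{x,a,N}`. -/
def Vxa {d : ℕ} (x : Ed d) (m a : ℝ) : Measure (Omega1 x) :=
  ENNReal.ofReal (1 - Real.exp (-m ^ 2 * a ^ 2 / (2 * d))) •
    Measure.sum fun N : ℕ =>
      ENNReal.ofReal (Real.exp (-m ^ 2 * a ^ 2 * N / (2 * d))) • VxaN x a N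

/-- `Wt` is the family of Wiener measures `(W_x^t)_{t>0}` on `Ω(x)`:
each `W_x^t` is a Borel probability measure, characterized by the characteristic
functions of its finite dimensional distributions
`∫ exp(i Σ_j ξ_j·ω(t_j)) dW_x^t = exp(-(t/2) Σ_j (t_j - t_{j-1}) |ξ_j + ⋯ + ξ_n|²
+ i x·(ξ_1 + ⋯ + ξ_n))` for all `0 = t_0 < t_1 < ⋯ < t_n ≤ 1`. -/
def IsWienerFamily {d : ℕ} (x : Ed d) (Wt : ℝ → Measure (Omega1 x)) : Prop :=
  ∀ t : ℝ, 0 < t → (IsProbabilityMeasure (Wt t) ∧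
    ∀ (n : ℕ) (ts : ℕ → ℝ), ts 0 = 0 → (∀ i < n, ts i < ts (i + 1)) → ts n ≤ 1 →
      ∀ ξ : Fin n → Ed d,
        (∫ ω : Omega1 x, Complex.exp (Complex.I *
            ((∑ i : Fin n, ⟪ξ i, evalAt ω.1 (ts ((i : ℕ) + 1))⟫ : ℝ) : ℂ)) ∂(Wt t))
          = Complex.exp
              (((-(t / 2) * ∑ i : Fin n,
                  (ts ((i : ℕ) + 1) - ts (i : ℕ)) * ‖∑ j ∈ Finset.Ici i, ξ j‖ ^ 2 : ℝ) : ℂ)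
                + Complex.I * ((⟪∑ j, ξ j, x⟫ : ℝ) : ℂ)))

/-!
Under `W_{x,a,N}`, an increment `ω(t) - ω(s)` is a combination `∑ cᵢ vᵢ` of independent centred
Gaussians of covariance `a² • id`, with `0 ≤ cᵢ ≤ 1` and `∑ cᵢ = N |t - s|`. It is thus Gaussian of
covariance at most `T |t - s| • id`, where `T = a² N`, and its fourth moment is at most
`κ T² |t - s|²` with `κ` depending only on `d`. Averaging over the geometric law of `N` bounds `T²`
in mean by `8 / m⁴`, uniformly in `a`. By Markov's inequality the laws of `T` are tight, and by
Kolmogorov's criterion so are the laws of `ω`; a family with tight marginals is tight.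
-/

section Tightness

lemma isTightMeasureSet_of_isClosedEmbedding {X Y : Type*} [TopologicalSpace X]
    [MeasurableSpace X] [OpensMeasurableSpace X] [TopologicalSpace Y] [MeasurableSpace Y]
    [BorelSpace Y] {f : X → Y} (hf : IsClosedEmbedding f) {S : Set (Measure X)}
    (hS : IsTightMeasureSet (Measure.map f '' S)) : IsTightMeasureSet S := by
  rw [isTightMeasureSet_iff_exists_isCompact_measure_compl_le] at hS ⊢
  intro ε hε
  obtain ⟨K, hK, hKε⟩ := hS ε hε
  refine ⟨f ⁻¹' K, hf.isCompact_preimage hK, fun μ hμ => ?_⟩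
  calc μ (f ⁻¹' K)ᶜ = μ (f ⁻¹' Kᶜ) := by rw [preimage_compl]
    _ ≤ μ.map f Kᶜ := Measure.le_map_apply hf.continuous.measurable.aemeasurable _
    _ ≤ ε := hKε _ (mem_image_of_mem _ hμ)

lemma isTightMeasureSet_of_lintegral_enorm_rpow_le {E : Type*} [NormedAddCommGroup E]
    [ProperSpace E] [MeasurableSpace E] [OpensMeasurableSpace E] {S : Set (Measure E)} {p : ℝ}
    (hp : 0 < p) {C : ℝ≥0∞} (hC : C ≠ ∞) (h : ∀ μ ∈ S, ∫⁻ x, ‖x‖ₑ ^ p ∂μ ≤ C) :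
    IsTightMeasureSet S := by
  refine isTightMeasureSet_of_tendsto_measure_norm_gt ?_
  have hlim : Tendsto (fun r : ℝ => C / ENNReal.ofReal r ^ p) atTop (𝓝 0) := by
    have := ((ENNReal.tendsto_rpow_at_top hp).comp ENNReal.tendsto_ofReal_atTop)
    simpa using ENNReal.Tendsto.const_div this (.inr hC)
  refine tendsto_of_tendsto_of_tendsto_of_le_of_le' tendsto_const_nhds hlim
    (.of_forall fun _ => zero_le) ?_
  filter_upwards [eventually_gt_atTop 0] with r hr
  refine iSup₂_le fun μ hμ => ?_
  calc μ {x | r < ‖x‖} ≤ μ {x | ENNReal.ofReal r ^ p ≤ ‖x‖ₑ ^ p} := by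
        refine measure_mono fun x hx => ?_
        rw [mem_ofPred_eq, ← ofReal_norm]
        exact ENNReal.rpow_le_rpow (ENNReal.ofReal_le_ofReal (le_of_lt hx)) hp.le
    _ ≤ (∫⁻ x, ‖x‖ₑ ^ p ∂μ) / ENNReal.ofReal r ^ p :=
        meas_ge_le_lintegral_div (by fun_prop)
          (ENNReal.rpow_pos (ENNReal.ofReal_pos.2 hr) ENNReal.ofReal_ne_top).ne'
          (ENNReal.rpow_ne_top_of_nonneg hp.le ENNReal.ofReal_ne_top)
    _ ≤ C / ENNReal.ofReal r ^ p := by gcongr; exact h μ hμ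

end Tightness

section Chaining

/-- The dyadic grid points `k / 2 ^ n` of the unit interval, stuck at `1` for `2 ^ n ≤ k`. -/
def dyadicPoint (n k : ℕ) : I := projIcc 0 1 zero_le_one (k / 2 ^ n : ℝ)

lemma dyadicPoint_succ_two_mul (n k : ℕ) : dyadicPoint (n + 1) (2 * k) = dyadicPoint n k := by
  rw [dyadicPoint, dyadicPoint, Nat.cast_mul, pow_succ', Nat.cast_ofNat,
    mul_div_mul_left _ _ two_ne_zero]

lemma dyadicPoint_of_two_pow_le {n k : ℕ} (hk : 2 ^ n ≤ k) : dyadicPoint n k = 1 := by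
  refine projIcc_of_right_le _ ((one_le_div (by positivity)).2 ?_)
  exact_mod_cast hk

lemma edist_dyadicPoint_succ_le (n k : ℕ) :
    edist (dyadicPoint n k) (dyadicPoint n (k + 1)) ≤ 2⁻¹ ^ n := by
  calc edist (dyadicPoint n k) (dyadicPoint n (k + 1))
      ≤ edist (k / 2 ^ n : ℝ) ((k + 1 : ℕ) / 2 ^ n : ℝ) :=
        (LipschitzWith.projIcc zero_le_one _ _).trans_eq (one_mul _)
    _ = ENNReal.ofReal (2⁻¹ ^ n) := by
        rw [edist_comm, edist_dist, Real.dist_eq, ← sub_div, Nat.cast_succ, add_sub_cancel_left,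
          one_div, ← inv_pow, abs_of_pos (by positivity)]
    _ = 2⁻¹ ^ n := by
        rw [ENNReal.ofReal_pow (by positivity), ENNReal.ofReal_inv_of_pos two_pos,
          ENNReal.ofReal_ofNat]

lemma tendsto_dyadicPoint_floor (t : I) :
    Tendsto (fun n => dyadicPoint n ⌊(t : ℝ) * 2 ^ n⌋₊) atTop (𝓝 t) := by
  have h : Tendsto (fun n : ℕ => (⌊(t : ℝ) * 2 ^ n⌋₊ / 2 ^ n : ℝ)) atTop (𝓝 t) :=
    (tendsto_nat_floor_mul_div_atTop t.2.1).comp (tendsto_pow_atTop_atTop_of_one_lt one_lt_two)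
  have hproj := (continuous_projIcc (h := zero_le_one' ℝ)).tendsto (t : ℝ)
  rw [projIcc_val] at hproj
  exact hproj.comp h

variable {E : Type*}

/-- The continuous paths whose increments along the `n`-th dyadic grid are at most `b n`. -/
def dyadicPaths (E : Type*) [PseudoEMetricSpace E] (b : ℕ → ℝ≥0∞) : Set C(I, E) :=
  {f | ∀ n k, edist (f (dyadicPoint n k)) (f (dyadicPoint n (k + 1))) ≤ b n}

lemma isClosed_dyadicPaths [PseudoEMetricSpace E] (b : ℕ → ℝ≥0∞) :
    IsClosed (dyadicPaths E b) := by
  simp only [dyadicPaths, ofPred_forall]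
  exact isClosed_iInter fun n => isClosed_iInter fun k =>
    isClosed_le ((continuous_eval_const _).edist (continuous_eval_const _)) continuous_const

variable {b : ℕ → ℝ≥0∞}

lemma edist_le_of_le_of_le_succ_of_mem_dyadicPaths [PseudoEMetricSpace E] {f : C(I, E)}
    (hf : f ∈ dyadicPaths E b) {n j k : ℕ} (hjk : j ≤ k) (hkj : k ≤ j + 1) :
    edist (f (dyadicPoint n j)) (f (dyadicPoint n k)) ≤ b n := by
  obtain rfl | rfl : k = j ∨ k = j + 1 := by lia
  · simp
  · exact hf n j

lemma edist_dyadicPoint_floor_le_of_mem_dyadicPaths [PseudoEMetricSpace E] {f : C(I, E)}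
    (hf : f ∈ dyadicPaths E b) (n : ℕ) (t : I) :
    edist (f (dyadicPoint n ⌊(t : ℝ) * 2 ^ n⌋₊)) (f t) ≤ ∑' m, b (n + (m + 1)) := by
  refine edist_le_tsum_of_edist_le_of_tendsto (fun m => b (m + 1)) (fun m => ?_)
    ((f.continuous.tendsto t).comp (tendsto_dyadicPoint_floor t)) n
  have hfloor : ⌊(t : ℝ) * 2 ^ m⌋₊ = ⌊(t : ℝ) * 2 ^ (m + 1)⌋₊ / 2 := by
    rw [← Nat.floor_div_ofNat, pow_succ, ← mul_assoc, mul_div_cancel_right₀ _ two_ne_zero]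
  rw [Function.comp_apply, ← dyadicPoint_succ_two_mul]
  exact edist_le_of_le_of_le_succ_of_mem_dyadicPaths hf (by lia) (by lia)

lemma edist_le_of_mem_dyadicPaths [PseudoEMetricSpace E] {f : C(I, E)}
    (hf : f ∈ dyadicPaths E b) {n : ℕ} {s t : I} (hst : dist s t ≤ 2⁻¹ ^ n) :
    edist (f s) (f t) ≤ 2 * ∑' m, b (n + m) := by
  wlog hle : s ≤ t generalizing s t
  · rw [edist_comm]
    exact this (by rwa [dist_comm]) (le_of_not_ge hle)
  have hle' : (s : ℝ) ≤ t := hle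
  have hts : (t : ℝ) * 2 ^ n ≤ s * 2 ^ n + 1 := by
    rw [dist_comm, Subtype.dist_eq, Real.dist_eq, abs_of_nonneg (sub_nonneg.2 hle'), inv_pow,
      ← one_div, le_div_iff₀ (by positivity), sub_mul] at hst
    linarith
  have hgrid : edist (f (dyadicPoint n ⌊(s : ℝ) * 2 ^ n⌋₊))
      (f (dyadicPoint n ⌊(t : ℝ) * 2 ^ n⌋₊)) ≤ b n := by
    refine edist_le_of_le_of_le_succ_of_mem_dyadicPaths hf (by gcongr) ?_
    rw [← Nat.floor_add_one (by have := s.2.1; positivity)]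
    exact Nat.floor_le_floor hts
  calc edist (f s) (f t)
      ≤ ∑' m, b (n + (m + 1)) + b n + ∑' m, b (n + (m + 1)) := by
        refine (edist_triangle4 _ _ _ _).trans (add_le_add (add_le_add ?_ hgrid)
          (edist_dyadicPoint_floor_le_of_mem_dyadicPaths hf n t))
        rw [edist_comm]
        exact edist_dyadicPoint_floor_le_of_mem_dyadicPaths hf n s
    _ ≤ (b n + ∑' m, b (n + (m + 1))) + (b n + ∑' m, b (n + (m + 1))) := by
        rw [add_comm (∑' m, b (n + (m + 1)))]
        gcongr
        exact le_add_self
    _ = 2 * ∑' m, b (n + m) := by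
        rw [two_mul, tsum_eq_zero_add' (f := fun m => b (n + m)) ENNReal.summable, add_zero]

lemma uniformEquicontinuous_dyadicPaths [PseudoMetricSpace E] (hb : ∑' n, b n ≠ ∞) :
    UniformEquicontinuous fun f : dyadicPaths E b => (f : C(I, E)) := by
  rw [Metric.uniformity_basis_dist.uniformEquicontinuous_iff uniformity_basis_edist]
  intro ε hε
  have hlim : Tendsto (fun n => 2 * ∑' m, b (n + m)) atTop (𝓝 0) := by
    simpa [add_comm] using
      ENNReal.Tendsto.const_mul (ENNReal.tendsto_sum_nat_add b hb) (.inr ENNReal.ofNat_ne_top)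
  obtain ⟨n, hn⟩ := (hlim.eventually_lt_const hε).exists
  exact ⟨2⁻¹ ^ n, by positivity, fun s t hst f =>
    (edist_le_of_mem_dyadicPaths f.2 hst.le).trans_lt hn⟩

lemma isCompact_of_isClosed_of_equicontinuous {X : Type*} [TopologicalSpace X] [CompactSpace X]
    [MetricSpace E] {A : Set C(X, E)} (hA : IsClosed A) {K : Set E} (hK : IsCompact K)
    (hAK : ∀ f ∈ A, ∀ x, f x ∈ K) (hequi : Equicontinuous fun f : A => (f : C(X, E))) :
    IsCompact A := by
  let e := ContinuousMap.isometryEquivBoundedOfCompact X E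
  rw [← e.toHomeomorph.isCompact_image]
  refine BoundedContinuousFunction.arzela_ascoli₂ K hK _ (e.toHomeomorph.isClosedMap _ hA) ?_ ?_
  · rintro _ x ⟨f, hf, rfl⟩
    exact hAK f hf x
  · refine fun x U hU => (hequi x U hU).mono ?_
    rintro y hy ⟨_, f, hf, rfl⟩
    exact hy ⟨f, hf⟩

lemma isCompact_dyadicPaths_inter_eval_zero_mem [MetricSpace E] [ProperSpace E]
    (hb : ∑' n, b n ≠ ∞) {K : Set E} (hK : IsCompact K) :
    IsCompact (dyadicPaths E b ∩ {f | f 0 ∈ K}) := by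
  have hfin : 2 * ∑' n, b n ≠ ∞ := ENNReal.mul_ne_top ENNReal.ofNat_ne_top hb
  refine isCompact_of_isClosed_of_equicontinuous
    ((isClosed_dyadicPaths b).inter (hK.isClosed.preimage (continuous_eval_const 0)))
    (hK.cthickening (r := (2 * ∑' n, b n).toReal)) (fun f hf t => ?_)
    ((uniformEquicontinuous_dyadicPaths hb).equicontinuous.comp
      (inclusion inter_subset_left))
  refine Metric.mem_cthickening_of_edist_le _ _ _ _ hf.2 ?_
  rw [ENNReal.ofReal_toReal hfin]
  simpa using edist_le_of_mem_dyadicPaths hf.1 (n := 0) (s := t) (t := 0)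
    ((Real.dist_le_of_mem_Icc_01 t.2 unitInterval.zero_mem).trans_eq (pow_zero _).symm)

end Chaining

section Kolmogorov

open ProbabilityTheory

variable {E : Type*} [MetricSpace E] [MeasurableSpace C(I, E)]

lemma measure_compl_dyadicPaths_le {b : ℕ → ℝ≥0∞} (hb0 : ∀ n, b n ≠ 0) (hb : ∀ n, b n ≠ ∞)
    {p q : ℝ} {M : NNReal} {μ : Measure C(I, E)}
    (hμ : IsKolmogorovProcess (fun (t : I) (f : C(I, E)) => f t) μ p q M) :
    μ (dyadicPaths E b)ᶜ ≤ ∑' n, 2 ^ n * (M * (2⁻¹ ^ n) ^ q / b n ^ p) := by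
  have hcover : (dyadicPaths E b)ᶜ ⊆ ⋃ n, ⋃ k ∈ Finset.range (2 ^ n),
      {f | b n ^ p ≤ edist (f (dyadicPoint n k)) (f (dyadicPoint n (k + 1))) ^ p} := by
    intro f hf
    simp only [dyadicPaths, mem_compl_iff, mem_ofPred_eq, not_forall, not_le] at hf
    obtain ⟨n, k, hnk⟩ := hf
    have hk : k < 2 ^ n := by
      by_contra! hk
      rw [dyadicPoint_of_two_pow_le hk, dyadicPoint_of_two_pow_le (hk.trans k.le_succ),
        edist_self] at hnk
      exact not_lt_zero hnk
    simp only [mem_iUnion, mem_ofPred_eq, Finset.mem_range]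
    exact ⟨n, k, hk, ENNReal.rpow_le_rpow hnk.le hμ.p_pos.le⟩
  have hincr (n k : ℕ) :
      μ {f | b n ^ p ≤ edist (f (dyadicPoint n k)) (f (dyadicPoint n (k + 1))) ^ p}
        ≤ M * (2⁻¹ ^ n) ^ q / b n ^ p := by
    refine (meas_ge_le_lintegral_div (hμ.measurable_edist.pow_const p).aemeasurable
      (ENNReal.rpow_pos (pos_iff_ne_zero.2 (hb0 n)) (hb n)).ne'
      (ENNReal.rpow_ne_top_of_nonneg hμ.p_pos.le (hb n))).trans ?_
    gcongr
    refine (hμ.kolmogorovCondition _ _).trans ?_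
    gcongr
    · exact hμ.q_pos.le
    · exact edist_dyadicPoint_succ_le n k
  calc μ (dyadicPaths E b)ᶜ
      ≤ ∑' n, ∑ k ∈ Finset.range (2 ^ n),
          μ {f | b n ^ p ≤ edist (f (dyadicPoint n k)) (f (dyadicPoint n (k + 1))) ^ p} :=
        (measure_mono hcover).trans <| (measure_iUnion_le _).trans <|
          ENNReal.tsum_le_tsum fun n => measure_biUnion_finset_le _ _
    _ ≤ ∑' n, 2 ^ n * (M * (2⁻¹ ^ n) ^ q / b n ^ p) := by
        refine ENNReal.tsum_le_tsum fun n => (Finset.sum_le_sum fun k _ => hincr n k).trans_eq ?_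
        simp

lemma ennreal_pow_rpow_comm (x : ℝ≥0∞) (n : ℕ) (y : ℝ) : (x ^ n) ^ y = (x ^ y) ^ n := by
  rw [← ENNReal.rpow_natCast, ← ENNReal.rpow_natCast, ← ENNReal.rpow_mul, ← ENNReal.rpow_mul,
    mul_comm]

lemma exists_lt_one_two_mul_inv_two_rpow_eq_sq {q : ℝ} (hq : 1 < q) :
    ∃ θ : ℝ≥0∞, θ ≠ 0 ∧ θ < 1 ∧ 2 * 2⁻¹ ^ q = θ ^ 2 := by
  refine ⟨2⁻¹ ^ ((q - 1) / 2), by simp,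
    ENNReal.rpow_lt_one (ENNReal.inv_lt_one.2 ENNReal.one_lt_two) (by linarith), ?_⟩
  calc (2 : ℝ≥0∞) * 2⁻¹ ^ q = 2 * 2⁻¹ ^ (1 + (q - 1)) := by rw [add_sub_cancel]
    _ = 2⁻¹ ^ (q - 1) := by
      rw [ENNReal.rpow_add _ _ (by simp) (by simp), ENNReal.rpow_one, ← mul_assoc,
        ENNReal.mul_inv_cancel two_ne_zero ENNReal.ofNat_ne_top, one_mul]
    _ = (2⁻¹ ^ ((q - 1) / 2)) ^ 2 := by
      rw [← ENNReal.rpow_natCast, ← ENNReal.rpow_mul, Nat.cast_ofNat,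
        div_mul_cancel₀ _ two_ne_zero]

/-- With `b n = (A θ ^ n) ^ (1 / p)`, where `θ ^ 2 = 2 ^ (1 - q)`, both `∑ b n` and the union bound
are geometric series of ratio less than `1`; a large `A` then makes the latter small. -/
lemma exists_tsum_ne_top_tsum_div_rpow_le {p q : ℝ} (hp : 0 < p) (hq : 1 < q) (M : NNReal)
    {ε : ℝ≥0∞} (hε : ε ≠ 0) :
    ∃ b : ℕ → ℝ≥0∞, (∀ n, b n ≠ 0) ∧ ∑' n, b n ≠ ∞ ∧
      ∑' n, 2 ^ n * (M * (2⁻¹ ^ n) ^ q / b n ^ p) ≤ ε := by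
  obtain ⟨θ, hθ0, hθ1, hθ⟩ := exists_lt_one_two_mul_inv_two_rpow_eq_sq hq
  have htsum {r : ℝ≥0∞} (hr : r < 1) : ∑' n, r ^ n ≠ ∞ := by
    rw [ENNReal.tsum_geometric]
    exact ENNReal.inv_ne_top.2 (tsub_pos_of_lt hr).ne'
  obtain ⟨A, hA0, hA⟩ := ENNReal.exists_nat_pos_inv_mul_lt
    (ENNReal.mul_ne_top (ENNReal.coe_ne_top (r := M)) (htsum hθ1)) hε
  have hA0' : (A : ℝ≥0∞) ≠ 0 := by exact_mod_cast hA0.ne'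
  have hθn (n : ℕ) : θ ^ n * (θ ^ n)⁻¹ = 1 :=
    ENNReal.mul_inv_cancel (pow_ne_zero n hθ0) (ENNReal.pow_ne_top hθ1.ne_top)
  refine ⟨fun n => A ^ p⁻¹ * (θ ^ p⁻¹) ^ n, fun n => ?_, ?_, ?_⟩
  · simp [hA0', hθ0, hp.le, hp]
  · rw [ENNReal.tsum_mul_left]
    exact ENNReal.mul_ne_top (ENNReal.rpow_ne_top_of_nonneg (by positivity)
      (ENNReal.natCast_ne_top A)) (htsum (ENNReal.rpow_lt_one hθ1 (by positivity)))
  · refine le_of_eq_of_le ?_ hA.le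
    rw [← mul_assoc, ← ENNReal.tsum_mul_left]
    refine tsum_congr fun n => ?_
    calc 2 ^ n * (M * (2⁻¹ ^ n) ^ q / (A ^ p⁻¹ * (θ ^ p⁻¹) ^ n) ^ p)
        = 2 ^ n * (M * (2⁻¹ ^ q) ^ n / (A * θ ^ n)) := by
          rw [ENNReal.mul_rpow_of_nonneg _ _ hp.le, ENNReal.rpow_inv_rpow hp.ne',
            ennreal_pow_rpow_comm (θ ^ p⁻¹), ENNReal.rpow_inv_rpow hp.ne', ennreal_pow_rpow_comm]
      _ = (A : ℝ≥0∞)⁻¹ * M * (2 * 2⁻¹ ^ q) ^ n * (θ ^ n)⁻¹ := by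
          rw [div_eq_mul_inv, ENNReal.mul_inv (.inl hA0') (.inl (ENNReal.natCast_ne_top A))]
          ring
      _ = (A : ℝ≥0∞)⁻¹ * M * θ ^ n * (θ ^ n * (θ ^ n)⁻¹) := by
          rw [hθ]
          ring
      _ = (A : ℝ≥0∞)⁻¹ * M * θ ^ n := by rw [hθn, mul_one]

theorem isTightMeasureSet_of_isKolmogorovProcess [ProperSpace E] [MeasurableSpace E]
    [BorelSpace E] [OpensMeasurableSpace C(I, E)] {S : Set (Measure C(I, E))} {p q : ℝ}
    {M : NNReal} (hq : 1 < q)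
    (h0 : IsTightMeasureSet (Measure.map (fun f : C(I, E) => f 0) '' S))
    (h : ∀ μ ∈ S, IsKolmogorovProcess (fun (t : I) (f : C(I, E)) => f t) μ p q M) :
    IsTightMeasureSet S := by
  rw [isTightMeasureSet_iff_exists_isCompact_measure_compl_le] at h0 ⊢
  intro ε hε
  rcases S.eq_empty_or_nonempty with rfl | ⟨μ₀, hμ₀⟩
  · exact ⟨∅, isCompact_empty, by simp⟩
  obtain ⟨K, hK, hKε⟩ := h0 (ε / 2) (ENNReal.half_pos hε.ne')
  obtain ⟨b, hb0, hbsum, hbε⟩ :=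
    exists_tsum_ne_top_tsum_div_rpow_le (h μ₀ hμ₀).p_pos hq M (ENNReal.half_pos hε.ne').ne'
  refine ⟨_, isCompact_dyadicPaths_inter_eval_zero_mem hbsum hK, fun μ hμ => ?_⟩
  calc μ (dyadicPaths E b ∩ {f | f 0 ∈ K})ᶜ
      ≤ μ (dyadicPaths E b)ᶜ + μ ((fun f : C(I, E) => f 0) ⁻¹' Kᶜ) := by
        rw [compl_inter]
        exact measure_union_le _ _
    _ ≤ ε / 2 + ε / 2 := by
        gcongr
        · exact (measure_compl_dyadicPaths_le hb0 (ENNReal.ne_top_of_tsum_ne_top hbsum)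
            (h μ hμ)).trans hbε
        · exact (Measure.le_map_apply (continuous_eval_const 0).measurable.aemeasurable _).trans
            (hKε _ (mem_image_of_mem _ hμ))
    _ = ε := ENNReal.add_halves ε

end Kolmogorov

section ProductDensity

lemma map_withDensity_comp {α β : Type*} [MeasurableSpace α] [MeasurableSpace β]
    {μ : Measure α} {ν : Measure β} {g : α → β} (hg : MeasurePreserving g μ ν) {f : β → ℝ≥0∞}
    (hf : Measurable f) : (μ.withDensity (f ∘ g)).map g = ν.withDensity f := by
  ext s hs
  rw [Measure.map_apply hg.measurable hs, withDensity_apply _ (hg.measurable hs),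
    withDensity_apply _ hs, ← hg.map_eq, setLIntegral_map hs hf hg.measurable]
  rfl

variable {α : Type*} [MeasurableSpace α]

lemma measurePreserving_fin_cons {n : ℕ} (μ : Fin (n + 1) → Measure α) [∀ i, SigmaFinite (μ i)] :
    MeasurePreserving (fun y : α × (Fin n → α) => (Fin.cons y.1 y.2 : Fin (n + 1) → α))
      ((μ 0).prod (Measure.pi fun i => μ i.succ)) (Measure.pi μ) := by
  convert (measurePreserving_piFinSuccAbove μ 0).symm
  · simp [Fin.insertNthEquiv]
  · rw [Fin.zero_succAbove]

lemma lintegral_fin_prod_eq_prod {n : ℕ} {μ : Fin n → Measure α} [∀ i, SigmaFinite (μ i)]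
    {f : Fin n → α → ℝ≥0∞} (hf : ∀ i, Measurable (f i)) :
    ∫⁻ x, ∏ i, f i (x i) ∂Measure.pi μ = ∏ i, ∫⁻ x, f i x ∂μ i := by
  induction n with
  | zero => simp
  | succ n ih =>
    have hprod {k : ℕ} {g : Fin k → α → ℝ≥0∞} (hg : ∀ i, Measurable (g i)) :
        Measurable fun x : Fin k → α => ∏ i, g i (x i) := by fun_prop
    rw [← (measurePreserving_fin_cons μ).lintegral_comp (hprod hf)]
    simp_rw [Fin.prod_univ_succ, Fin.cons_zero, Fin.cons_succ]
    rw [lintegral_prod_mul (hf 0).aemeasurable (hprod fun i => hf i.succ).aemeasurable,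
      ih fun i => hf i.succ]

lemma pi_withDensity {n : ℕ} {μ : Fin n → Measure α} [∀ i, SigmaFinite (μ i)]
    {f : Fin n → α → ℝ≥0∞} (hf : ∀ i, Measurable (f i))
    [∀ i, SigmaFinite ((μ i).withDensity (f i))] :
    (Measure.pi μ).withDensity (fun x => ∏ i, f i (x i))
      = Measure.pi fun i => (μ i).withDensity (f i) := by
  refine (Measure.pi_eq fun s hs => ?_).symm
  rw [withDensity_apply _ (.univ_pi hs), Measure.restrict_pi_pi, lintegral_fin_prod_eq_prod hf]
  simp_rw [withDensity_apply _ (hs _)]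

end ProductDensity

section IsotropicGaussian

open ProbabilityTheory Module

variable (V : Type*) [NormedAddCommGroup V] [InnerProductSpace ℝ V]

/-- The Lebesgue density, for `s ≠ 0`, of the centred Gaussian measure on `V` with covariance
`s² • id`. -/
def isotropicGaussianPDFReal (s : ℝ) (w : V) : ℝ :=
  (2 * π * s ^ 2) ^ (-(finrank ℝ V : ℝ) / 2) * Real.exp (-‖w‖ ^ 2 / (2 * s ^ 2))

variable {V}

lemma isotropicGaussianPDFReal_nonneg (s : ℝ) (w : V) : 0 ≤ isotropicGaussianPDFReal V s w := by
  unfold isotropicGaussianPDFReal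
  positivity

lemma measurable_isotropicGaussianPDFReal [MeasurableSpace V] [OpensMeasurableSpace V]
    (s : ℝ) : Measurable (isotropicGaussianPDFReal V s) := by
  unfold isotropicGaussianPDFReal
  fun_prop

lemma isotropicGaussianPDFReal_mul_cexp (s : ℝ) (t w : V) :
    isotropicGaussianPDFReal V s w * Complex.exp (Complex.I * ⟪t, w⟫)
      = ((2 * π * s ^ 2) ^ (-(finrank ℝ V : ℝ) / 2) : ℝ) *
        Complex.exp (-((1 / (2 * s ^ 2) : ℝ) : ℂ) * ‖w‖ ^ 2 + Complex.I * ⟪t, w⟫) := by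
  rw [isotropicGaussianPDFReal, Complex.ofReal_mul, mul_assoc, Complex.ofReal_exp,
    ← Complex.exp_add]
  congr 3
  push_cast
  ring

variable (V) [FiniteDimensional ℝ V] [MeasurableSpace V] [BorelSpace V]

/-- The centred Gaussian measure on `V` with covariance `s² • id`; a Dirac mass if `s = 0`. -/
def isotropicGaussian (s : ℝ) : Measure V := (stdGaussian V).map (s • ·)

instance (s : ℝ) : IsProbabilityMeasure (isotropicGaussian V s) :=
  Measure.isProbabilityMeasure_map (by fun_prop)

lemma charFun_isotropicGaussian (s : ℝ) (t : V) :
    charFun (isotropicGaussian V s) t = Complex.exp (-(s ^ 2 * ‖t‖ ^ 2 / 2 : ℝ)) := by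
  rw [isotropicGaussian, charFun_map_smul, charFun_stdGaussian, norm_smul,
    ← Complex.ofReal_pow, mul_pow, Real.norm_eq_abs, sq_abs]
  push_cast
  ring_nf

variable {V}

lemma integrable_isotropicGaussianPDFReal {s : ℝ} (hs : s ≠ 0) :
    Integrable (isotropicGaussianPDFReal V s) := by
  have h := (GaussianFourier.integrable_cexp_neg_mul_sq_norm_add (V := V)
    (b := ((1 / (2 * s ^ 2) : ℝ) : ℂ)) (by rw [Complex.ofReal_re]; positivity)
    Complex.I 0).const_mul (((2 * π * s ^ 2) ^ (-(finrank ℝ V : ℝ) / 2) : ℝ) : ℂ)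
  simp_rw [← isotropicGaussianPDFReal_mul_cexp] at h
  simpa using h.re

lemma integral_isotropicGaussianPDFReal_mul_cexp {s : ℝ} (hs : s ≠ 0) (t : V) :
    ∫ w, isotropicGaussianPDFReal V s w * Complex.exp (Complex.I * ⟪t, w⟫)
      = Complex.exp (-(s ^ 2 * ‖t‖ ^ 2 / 2 : ℝ)) := by
  simp_rw [isotropicGaussianPDFReal_mul_cexp]
  have hpow : ((π : ℂ) / ((1 / (2 * s ^ 2) : ℝ) : ℂ)) ^ ((finrank ℝ V : ℂ) / 2)
      = (((2 * π * s ^ 2) ^ ((finrank ℝ V : ℝ) / 2) : ℝ) : ℂ) := by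
    rw [Complex.ofReal_cpow (by positivity)]
    push_cast
    congr 1
    field_simp
  have hs' : (s : ℂ) ≠ 0 := by exact_mod_cast hs
  rw [integral_const_mul, GaussianFourier.integral_cexp_neg_mul_sq_norm_add
    (by rw [Complex.ofReal_re]; positivity), hpow, ← mul_assoc, ← Complex.ofReal_mul,
    ← Real.rpow_add (by positivity), neg_div, neg_add_cancel, Real.rpow_zero, Complex.ofReal_one,
    one_mul, Complex.I_sq]
  congr 1
  push_cast
  field_simp
  norm_num

theorem withDensity_isotropicGaussianPDFReal {s : ℝ} (hs : s ≠ 0) :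
    volume.withDensity (fun w => ENNReal.ofReal (isotropicGaussianPDFReal V s w))
      = isotropicGaussian V s := by
  have := isFiniteMeasure_withDensity_ofReal (integrable_isotropicGaussianPDFReal (V := V) hs).2
  refine Measure.ext_of_charFun (funext fun t => ?_)
  rw [charFun_isotropicGaussian, ← integral_isotropicGaussianPDFReal_mul_cexp hs, charFun_apply,
    integral_withDensity_eq_integral_toReal_smul
      (measurable_isotropicGaussianPDFReal s).ennreal_ofReal (by simp)]
  refine integral_congr_ae (.of_forall fun w => ?_)
  simp only [ENNReal.toReal_ofReal (isotropicGaussianPDFReal_nonneg s w), Complex.real_smul,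
    real_inner_comm w t, mul_comm Complex.I]

lemma map_smul_isotropicGaussian (c s : ℝ) :
    (isotropicGaussian V s).map (c • ·) = isotropicGaussian V (c * s) := by
  rw [isotropicGaussian, isotropicGaussian, Measure.map_map (by fun_prop) (by fun_prop)]
  congr 1
  ext w
  simp [mul_smul]

theorem map_sum_smul_pi_isotropicGaussian {ι : Type*} [Fintype ι] (c : ι → ℝ) (s : ℝ) :
    (Measure.pi fun _ : ι => isotropicGaussian V s).map (fun v => ∑ i, c i • v i)
      = isotropicGaussian V (√(∑ i, c i ^ 2) * s) := by
  have hsmul : (Measure.pi fun _ : ι => isotropicGaussian V s).map (fun v i => c i • v i)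
      = Measure.pi fun i => isotropicGaussian V (c i * s) := by
    simp_rw [← map_smul_isotropicGaussian]
    exact Measure.pi_map_pi (f := fun i w => c i • w) fun i => by fun_prop
  have hsum : (Measure.pi fun _ : ι => isotropicGaussian V s).map (fun v => ∑ i, c i • v i)
      = (Measure.pi fun i => isotropicGaussian V (c i * s)).map (fun v => ∑ i, v i) := by
    rw [← hsmul, Measure.map_map (by fun_prop) (by fun_prop)]
    rfl
  rw [hsum]
  refine Measure.ext_of_charFun (funext fun t => ?_)
  rw [charFun_map_sum_pi_eq_prod, Finset.prod_apply]
  simp_rw [charFun_isotropicGaussian, mul_pow,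
    Real.sq_sqrt (Finset.sum_nonneg fun i _ => sq_nonneg (c i))]
  rw [← Complex.exp_sum]
  congr 1
  push_cast
  simp_rw [Finset.sum_mul, Finset.sum_div, Finset.sum_neg_distrib]

variable (V) in
/-- The `n`-th absolute moment of the standard Gaussian on `V`. -/
def stdGaussianMoment (n : ℕ) : ℝ≥0∞ := ∫⁻ w, ‖w‖ₑ ^ n ∂stdGaussian V

lemma stdGaussianMoment_ne_top (n : ℕ) : stdGaussianMoment V n ≠ ∞ := by
  simpa [stdGaussianMoment] using
    (IsGaussian.memLp_id (stdGaussian V) n (by simp)).integrable_enorm_pow'.2.ne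

lemma lintegral_enorm_pow_isotropicGaussian (s : ℝ) (n : ℕ) :
    ∫⁻ w, ‖w‖ₑ ^ n ∂isotropicGaussian V s = ‖s‖ₑ ^ n * stdGaussianMoment V n := by
  rw [isotropicGaussian, lintegral_map (by fun_prop) (by fun_prop)]
  simp_rw [enorm_smul, mul_pow]
  exact lintegral_const_mul _ (by fun_prop)

end IsotropicGaussian

section Increments

variable {d : ℕ}

/-- The increments `x₁ - x, x₂ - x₁, …` of the sequence of points `x, x₁, x₂, …`. -/
def pathIncrements (x : Ed d) {N : ℕ} (xs : Fin N → Ed d) (i : Fin N) : Ed d :=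
  xs i - prevPt x xs i

lemma measurable_uncurry_pathIncrements (N : ℕ) :
    Measurable fun p : Ed d × (Fin N → Ed d) => pathIncrements p.1 p.2 := by
  refine measurable_pi_lambda _ fun i => ?_
  unfold pathIncrements prevPt
  split_ifs <;> fun_prop

lemma pathIncrements_cons (x y : Ed d) {N : ℕ} (ys : Fin N → Ed d) :
    pathIncrements x (Fin.cons y ys : Fin (N + 1) → Ed d)
      = Fin.cons (y - x) (pathIncrements y ys) := by
  funext i
  refine Fin.cases ?_ (fun j => ?_) i
  · simp [pathIncrements, prevPt]
  · simp only [pathIncrements, prevPt, Fin.cons_succ, Fin.val_succ, Nat.succ_ne_zero, if_false]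
    congr 1
    obtain ⟨_ | _, _⟩ := j <;> rfl

theorem measurePreserving_pathIncrements (x : Ed d) (N : ℕ) :
    MeasurePreserving (pathIncrements x : (Fin N → Ed d) → Fin N → Ed d) := by
  induction N generalizing x with
  | zero =>
    rw [Subsingleton.elim (pathIncrements x) id]
    exact .id volume
  | succ N ih =>
    have hcons := measurePreserving_fin_cons fun _ : Fin (N + 1) => (volume : Measure (Ed d))
    have hskew : MeasurePreserving
        (fun p : Ed d × (Fin N → Ed d) => (p.1 - x, pathIncrements p.1 p.2)) :=
      (measurePreserving_sub_right volume x).skew_product (measurable_uncurry_pathIncrements N)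
        (.of_forall fun y => (ih y).map_eq)
    have hmeas : Measurable (pathIncrements x : (Fin (N + 1) → Ed d) → Fin (N + 1) → Ed d) :=
      (measurable_uncurry_pathIncrements (N + 1)).comp measurable_prodMk_left
    refine ⟨hmeas, ?_⟩
    have hcomp := hcons.comp hskew
    simp_rw [Function.comp_def, ← pathIncrements_cons] at hcomp
    rw [volume_pi, ← hcons.map_eq, Measure.map_map hmeas hcons.measurable, hcons.map_eq]
    exact hcomp.map_eq

lemma continuous_pwLin1 (x : Ed d) (N : ℕ) : Continuous (pwLin1 x N) := by
  refine Continuous.subtype_mk (ContinuousMap.continuous_of_continuous_uncurry _ ?_) _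
  refine continuous_const.add (continuous_finsetSum _ fun i _ => ?_)
  exact (clamp01_continuous.comp (by fun_prop)).smul (by fun_prop)

theorem WxaN_eq_map_pi_isotropicGaussian (x : Ed d) {a : ℝ} (ha : a ≠ 0) (N : ℕ) :
    WxaN x a N = (Measure.pi fun _ : Fin N => isotropicGaussian (Ed d) a).map
      (fun v => ((a ^ 2 * N : ℝ), pwLin1 x N v)) := by
  set g : Ed d → ℝ≥0∞ := fun w => ENNReal.ofReal (isotropicGaussianPDFReal (Ed d) a w) with hg
  have hg_meas : Measurable g := (measurable_isotropicGaussianPDFReal a).ennreal_ofReal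
  have hdensity : volume.withDensity g = isotropicGaussian (Ed d) a :=
    withDensity_isotropicGaussianPDFReal ha
  have : SigmaFinite (volume.withDensity g) := by rw [hdensity]; infer_instance
  have hpath : Measurable fun v : Fin N → Ed d => ((a ^ 2 * N : ℝ), pwLin1 x N v) :=
    measurable_const.prodMk (continuous_pwLin1 x N).measurable
  rw [← hdensity, ← pi_withDensity fun _ => hg_meas, ← volume_pi,
    ← map_withDensity_comp (measurePreserving_pathIncrements x N) (by fun_prop),
    Measure.map_map hpath (measurePreserving_pathIncrements x N).measurable, WxaN]
  simp_rw [ENNReal.ofReal_prod_of_nonneg fun i _ =>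
    mul_nonneg (Real.rpow_nonneg (by positivity : 0 ≤ 2 * π * a ^ 2) _) (Real.exp_nonneg _)]
  simp only [hg, isotropicGaussianPDFReal, finrank_euclideanSpace_fin]
  rfl

end Increments

section IncrementMoments

variable {d : ℕ}

lemma clamp01_mono : Monotone clamp01 := fun _ _ h =>
  min_le_min le_rfl (max_le_max le_rfl h)

lemma clamp01_mem_Icc (r : ℝ) : clamp01 r ∈ Icc (0 : ℝ) 1 :=
  ⟨le_min zero_le_one (le_max_left _ _), min_le_left _ _⟩

lemma sum_clamp01_sub_natCast (N : ℕ) {r : ℝ} (hr : 0 ≤ r) :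
    ∑ i ∈ Finset.range N, clamp01 (r - i) = min (N : ℝ) r := by
  induction N with
  | zero => simp [hr]
  | succ N ih =>
    rw [Finset.sum_range_succ, ih]
    push_cast
    rcases le_total r N with h | h
    · rw [clamp01_of_nonpos (by linarith), min_eq_right h, min_eq_right (by linarith), add_zero]
    · rcases le_total (N + 1 : ℝ) r with h' | h'
      · rw [clamp01_of_one_le (by linarith), min_eq_left h, min_eq_left h']
      · rw [min_eq_left h, min_eq_right h', clamp01, max_eq_right (by linarith),
          min_eq_right (by linarith)]
        ring

/-- The coefficient of the `i`-th increment in `pwLinE x N v t - pwLinE x N v s`. -/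
def incrementCoeff (N : ℕ) (s t : ℝ) (i : Fin N) : ℝ :=
  clamp01 (N * t - (i : ℕ)) - clamp01 (N * s - (i : ℕ))

lemma pwLinE_sub_pwLinE (x : Ed d) (N : ℕ) (v : Fin N → Ed d) (s t : I) :
    pwLinE x N v t - pwLinE x N v s = ∑ i, incrementCoeff N s t i • v i := by
  simp only [pwLinE, ContinuousMap.coe_mk, incrementCoeff, sub_smul, Finset.sum_sub_distrib]
  abel

lemma sum_incrementCoeff (N : ℕ) (s t : I) :
    ∑ i : Fin N, incrementCoeff N s t i = N * ((t : ℝ) - s) := by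
  have hsum (r : I) : ∑ i : Fin N, clamp01 (N * r - (i : ℕ)) = N * r := by
    rw [Fin.sum_univ_eq_sum_range (fun i : ℕ => clamp01 (N * r - i)),
      sum_clamp01_sub_natCast N (mul_nonneg N.cast_nonneg r.2.1), min_eq_right]
    exact mul_le_of_le_one_right N.cast_nonneg r.2.2
  simp only [incrementCoeff, Finset.sum_sub_distrib, hsum, mul_sub]

lemma sum_incrementCoeff_sq_le (N : ℕ) (s t : I) :
    ∑ i : Fin N, incrementCoeff N s t i ^ 2 ≤ N * dist s t := by
  wlog hst : s ≤ t generalizing s t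
  · rw [dist_comm]
    refine le_of_eq_of_le (Finset.sum_congr rfl fun i _ => ?_) (this t s (le_of_not_ge hst))
    simp only [incrementCoeff]
    ring
  have hdist : dist s t = (t : ℝ) - s := by
    rw [dist_comm, Subtype.dist_eq, Real.dist_eq,
      abs_of_nonneg (sub_nonneg.2 (Subtype.coe_le_coe.2 hst))]
  rw [hdist, ← sum_incrementCoeff]
  refine Finset.sum_le_sum fun i _ => ?_
  have h0 : 0 ≤ incrementCoeff N s t i := sub_nonneg.2 (clamp01_mono (by gcongr))
  have h1 : incrementCoeff N s t i ≤ 1 :=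
    (sub_le_self _ (clamp01_mem_Icc _).1).trans (clamp01_mem_Icc _).2
  nlinarith

lemma map_fst_WxaN (x : Ed d) {a : ℝ} (ha : a ≠ 0) (N : ℕ) :
    (WxaN x a N).map Prod.fst = Measure.dirac (a ^ 2 * N) := by
  rw [WxaN_eq_map_pi_isotropicGaussian x ha, Measure.map_map measurable_fst
    (measurable_const.prodMk (continuous_pwLin1 x N).measurable)]
  simp [Function.comp_def, Measure.map_const]

lemma lintegral_enorm_fst_pow_WxaN (x : Ed d) {a : ℝ} (ha : a ≠ 0) (N k : ℕ) :
    ∫⁻ p, ‖p.1‖ₑ ^ k ∂WxaN x a N = ENNReal.ofReal (a ^ 2 * N) ^ k := by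
  rw [← lintegral_map (f := fun r : ℝ => ‖r‖ₑ ^ k) (by fun_prop) measurable_fst,
    map_fst_WxaN x ha, lintegral_dirac, Real.enorm_of_nonneg (by positivity)]

lemma measurable_increment (x : Ed d) (s t : I) :
    Measurable fun p : ℝ × Omega1 x => p.2.1 t - p.2.1 s := by
  have : Continuous fun ω : Omega1 x => ω.1 t - ω.1 s := by fun_prop
  exact this.measurable.comp measurable_snd

lemma map_increment_WxaN (x : Ed d) {a : ℝ} (ha : a ≠ 0) (N : ℕ) (s t : I) :
    (WxaN x a N).map (fun p => p.2.1 t - p.2.1 s)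
      = isotropicGaussian (Ed d) (√(∑ i, incrementCoeff N s t i ^ 2) * a) := by
  rw [WxaN_eq_map_pi_isotropicGaussian x ha,
    Measure.map_map (measurable_increment x s t)
      (measurable_const.prodMk (continuous_pwLin1 x N).measurable),
    ← map_sum_smul_pi_isotropicGaussian]
  simp_rw [Function.comp_def, pwLin1, pwLinE_sub_pwLinE]

theorem lintegral_edist_pow_WxaN_le (x : Ed d) {a : ℝ} (ha : a ≠ 0) (N k : ℕ) (s t : I) :
    ∫⁻ p, edist (p.2.1 s) (p.2.1 t) ^ (2 * k) ∂WxaN x a N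
      ≤ stdGaussianMoment (Ed d) (2 * k) * edist s t ^ k * ∫⁻ p, ‖p.1‖ₑ ^ k ∂WxaN x a N := by
  have hscale : ‖√(∑ i, incrementCoeff N s t i ^ 2) * a‖ₑ ^ 2
      ≤ edist s t * ENNReal.ofReal (a ^ 2 * N) := by
    rw [enorm_mul, mul_pow, ← enorm_pow, ← enorm_pow, Real.sq_sqrt (by positivity),
      Real.enorm_of_nonneg (by positivity), Real.enorm_of_nonneg (by positivity), edist_dist,
      ← ENNReal.ofReal_mul (by positivity), ← ENNReal.ofReal_mul dist_nonneg]
    refine ENNReal.ofReal_le_ofReal ?_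
    calc (∑ i, incrementCoeff N s t i ^ 2) * a ^ 2 ≤ N * dist s t * a ^ 2 := by
          gcongr
          exact sum_incrementCoeff_sq_le N s t
      _ = dist s t * (a ^ 2 * N) := by ring
  calc ∫⁻ p, edist (p.2.1 s) (p.2.1 t) ^ (2 * k) ∂WxaN x a N
      = ∫⁻ w, ‖w‖ₑ ^ (2 * k) ∂(WxaN x a N).map (fun p => p.2.1 t - p.2.1 s) := by
        rw [lintegral_map (by fun_prop) (measurable_increment x s t)]
        exact lintegral_congr fun p => by rw [edist_comm, edist_eq_enorm_sub]
    _ = (‖√(∑ i, incrementCoeff N s t i ^ 2) * a‖ₑ ^ 2) ^ k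
          * stdGaussianMoment (Ed d) (2 * k) := by
        rw [map_increment_WxaN x ha, lintegral_enorm_pow_isotropicGaussian, pow_mul]
    _ ≤ (edist s t * ENNReal.ofReal (a ^ 2 * N)) ^ k * stdGaussianMoment (Ed d) (2 * k) := by
        gcongr
    _ = _ := by
        rw [lintegral_enorm_fst_pow_WxaN x ha]
        ring

end IncrementMoments

section GeometricMixture

lemma hasSum_sq_mul_geometric {r : ℝ} (hr : ‖r‖ < 1) :
    HasSum (fun n : ℕ => (n : ℝ) ^ 2 * r ^ n) ((r + r ^ 2) / (1 - r) ^ 3) := by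
  have hr' : 1 - r ≠ 0 := (sub_pos.2 ((le_abs_self r).trans_lt hr)).ne'
  have h (k : ℕ) := hasSum_choose_mul_geometric_of_norm_lt_one k hr
  have hterm (n : ℕ) : (n : ℝ) ^ 2 * r ^ n = 2 * ((n + 2).choose 2 * r ^ n)
      - 3 * ((n + 1).choose 1 * r ^ n) + (n + 0).choose 0 * r ^ n := by
    simp only [Nat.cast_choose_two, Nat.choose_one_right, Nat.choose_zero_right]
    push_cast
    ring
  have hval : (r + r ^ 2) / (1 - r) ^ 3 = 2 * (1 / (1 - r) ^ (2 + 1))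
      - 3 * (1 / (1 - r) ^ (1 + 1)) + 1 / (1 - r) ^ (0 + 1) := by
    field_simp
    ring
  simp_rw [hterm, hval]
  exact (((h 2).mul_left 2).sub ((h 1).mul_left 3)).add (h 0)

lemma sq_mul_exp_neg_le {y : ℝ} (hy : 0 ≤ y) :
    y ^ 2 * Real.exp (-y) ≤ (1 - Real.exp (-y)) ^ 2 := by
  have hsinh : y / 2 ≤ Real.sinh (y / 2) := Real.self_le_sinh_iff.2 (by positivity)
  have hsq : y ^ 2 ≤ (2 * Real.sinh (y / 2)) ^ 2 := by gcongr; linarith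
  have hexp : Real.exp (-y) = Real.exp (-(y / 2)) ^ 2 := by
    rw [← Real.exp_nat_mul]
    ring_nf
  have hfactor : 1 - Real.exp (-y) = 2 * Real.sinh (y / 2) * Real.exp (-(y / 2)) := by
    rw [Real.sinh_eq, hexp, mul_div_cancel₀ _ two_ne_zero, sub_mul, ← Real.exp_add,
      add_neg_cancel, Real.exp_zero, sq]
  rw [hfactor, mul_pow, ← hexp]
  gcongr

lemma norm_exp_neg_lt_one {y : ℝ} (hy : 0 < y) : ‖Real.exp (-y)‖ < 1 := by
  rwa [Real.norm_eq_abs, Real.abs_exp, Real.exp_lt_one_iff, neg_lt_zero]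

lemma one_sub_exp_neg_mul_tsum_sq_mul_le {y : ℝ} (hy : 0 < y) :
    (1 - Real.exp (-y)) * ∑' n : ℕ, (n : ℝ) ^ 2 * Real.exp (-y) ^ n ≤ 2 / y ^ 2 := by
  set r := Real.exp (-y)
  have hr0 : 0 < r := Real.exp_pos _
  have hr1 : r < 1 := (le_abs_self r).trans_lt (norm_exp_neg_lt_one hy)
  have hr' : 0 < 1 - r := sub_pos.2 hr1
  calc (1 - r) * ∑' n : ℕ, (n : ℝ) ^ 2 * r ^ n = (r + r ^ 2) / (1 - r) ^ 2 := by
        rw [(hasSum_sq_mul_geometric (r := r) (norm_exp_neg_lt_one hy)).tsum_eq]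
        field_simp
    _ ≤ 2 * r / (1 - r) ^ 2 := by
        gcongr
        nlinarith
    _ ≤ 2 / y ^ 2 := by
        rw [div_le_div_iff₀ (by positivity) (by positivity)]
        linarith [sq_mul_exp_neg_le hy.le]

variable {d : ℕ}

lemma lintegral_Wxa (x : Ed d) (m a : ℝ) (f : ℝ × Omega1 x → ℝ≥0∞) :
    ∫⁻ p, f p ∂Wxa x m a = ENNReal.ofReal (1 - Real.exp (-m ^ 2 * a ^ 2 / 2)) *
      ∑' N : ℕ, ENNReal.ofReal (Real.exp (-m ^ 2 * a ^ 2 * N / 2)) * ∫⁻ p, f p ∂WxaN x a N := by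
  simp only [Wxa, lintegral_smul_measure, lintegral_sum_measure, smul_eq_mul]

lemma lintegral_Wxa_le_mul {x : Ed d} {a : ℝ} {f g : ℝ × Omega1 x → ℝ≥0∞} {C : ℝ≥0∞}
    (h : ∀ N, ∫⁻ p, f p ∂WxaN x a N ≤ C * ∫⁻ p, g p ∂WxaN x a N) (m : ℝ) :
    ∫⁻ p, f p ∂Wxa x m a ≤ C * ∫⁻ p, g p ∂Wxa x m a := by
  simp_rw [lintegral_Wxa, mul_left_comm C, ← ENNReal.tsum_mul_left, mul_left_comm C]
  gcongr with N
  exact h N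

theorem lintegral_enorm_fst_sq_Wxa_le (x : Ed d) {m a : ℝ} (hm : m ≠ 0) (ha : a ≠ 0) :
    ∫⁻ p, ‖p.1‖ₑ ^ 2 ∂Wxa x m a ≤ ENNReal.ofReal (8 / m ^ 4) := by
  set y : ℝ := m ^ 2 * a ^ 2 / 2 with hy
  have hy0 : 0 < y := by positivity
  have hweight (N : ℕ) : Real.exp (-m ^ 2 * a ^ 2 * N / 2) = Real.exp (-y) ^ N := by
    rw [← Real.exp_nat_mul, hy]
    ring_nf
  have hsum := (hasSum_sq_mul_geometric (norm_exp_neg_lt_one hy0)).summable.mul_left (a ^ 4)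
  calc ∫⁻ p, ‖p.1‖ₑ ^ 2 ∂Wxa x m a
      = ENNReal.ofReal (1 - Real.exp (-y)) *
          ∑' N : ℕ, ENNReal.ofReal (a ^ 4 * (N ^ 2 * Real.exp (-y) ^ N)) := by
        rw [lintegral_Wxa]
        congr 3
        · rw [hy]
          ring_nf
        · funext N
          rw [lintegral_enorm_fst_pow_WxaN x ha, hweight, ← ENNReal.ofReal_pow (by positivity),
            ← ENNReal.ofReal_mul (by positivity)]
          ring_nf
    _ = ENNReal.ofReal ((1 - Real.exp (-y)) * ∑' N : ℕ, (a ^ 4 * (N ^ 2 * Real.exp (-y) ^ N))) := by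
        rw [← ENNReal.ofReal_tsum_of_nonneg (fun N => by positivity) hsum,
          ENNReal.ofReal_mul (sub_nonneg.2 (Real.exp_le_one_iff.2 (neg_nonpos.2 hy0.le)))]
    _ ≤ ENNReal.ofReal (a ^ 4 * (2 / y ^ 2)) := by
        rw [tsum_mul_left, mul_left_comm]
        gcongr
        exact one_sub_exp_neg_mul_tsum_sq_mul_le hy0
    _ = ENNReal.ofReal (8 / m ^ 4) := by
        rw [hy]
        congr 1
        field_simp
        norm_num

end GeometricMixture

section WalkTightness

open ProbabilityTheory

variable {d : ℕ} {m : ℝ}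

lemma isTightMeasureSet_fst_Wxa (hm : m ≠ 0) (x : Ed d) :
    IsTightMeasureSet (Measure.fst '' (Wxa x m '' {0}ᶜ)) := by
  refine isTightMeasureSet_of_lintegral_enorm_rpow_le two_pos
    (ENNReal.ofReal_ne_top (r := 8 / m ^ 4)) ?_
  rintro _ ⟨_, ⟨a, ha, rfl⟩, rfl⟩
  rw [Measure.fst, lintegral_map (by fun_prop) measurable_fst]
  exact_mod_cast lintegral_enorm_fst_sq_Wxa_le x hm ha

lemma lintegral_edist_pow_four_Wxa_le (hm : m ≠ 0) {a : ℝ} (ha : a ≠ 0) (x : Ed d) (s t : I) :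
    ∫⁻ p, edist (p.2.1 s) (p.2.1 t) ^ 4 ∂Wxa x m a
      ≤ stdGaussianMoment (Ed d) 4 * ENNReal.ofReal (8 / m ^ 4) * edist s t ^ 2 := by
  calc ∫⁻ p, edist (p.2.1 s) (p.2.1 t) ^ 4 ∂Wxa x m a
      ≤ stdGaussianMoment (Ed d) 4 * edist s t ^ 2 * ∫⁻ p, ‖p.1‖ₑ ^ 2 ∂Wxa x m a :=
        lintegral_Wxa_le_mul (fun N => lintegral_edist_pow_WxaN_le x ha N 2 s t) m
    _ ≤ stdGaussianMoment (Ed d) 4 * edist s t ^ 2 * ENNReal.ofReal (8 / m ^ 4) := by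
        gcongr
        exact lintegral_enorm_fst_sq_Wxa_le x hm ha
    _ = _ := mul_right_comm _ _ _

lemma isKolmogorovProcess_Wxa (hm : m ≠ 0) {a : ℝ} (ha : a ≠ 0) (x : Ed d) :
    IsKolmogorovProcess (fun (t : I) (ω : PathSp d) => ω t)
      ((Wxa x m a).snd.map Subtype.val) 4 2
      (stdGaussianMoment (Ed d) 4 * ENNReal.ofReal (8 / m ^ 4)).toNNReal := by
  have heval (t : I) : Measurable fun ω : PathSp d => ω t := (continuous_eval_const t).measurable
  refine .mk_of_secondCountableTopology heval (fun s t => ?_) (by norm_num) two_pos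
  have hedist : Measurable fun ω : PathSp d => edist (ω s) (ω t) ^ (4 : ℝ) := by fun_prop
  rw [Measure.snd, Measure.map_map measurable_subtype_coe measurable_snd,
    lintegral_map hedist (measurable_subtype_coe.comp measurable_snd), ENNReal.coe_toNNReal
      (ENNReal.mul_ne_top (stdGaussianMoment_ne_top 4) ENNReal.ofReal_ne_top)]
  exact_mod_cast lintegral_edist_pow_four_Wxa_le hm ha x s t

lemma isTightMeasureSet_map_eval_zero {x : Ed d} (S : Set (Measure (Omega1 x))) :
    IsTightMeasureSet
      (Measure.map (fun ω : PathSp d => ω 0) '' (Measure.map Subtype.val '' S)) := by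
  refine isTightMeasureSet_iff_exists_isCompact_measure_compl_le.2 fun ε _ =>
    ⟨{x}, isCompact_singleton, ?_⟩
  rintro _ ⟨_, ⟨μ, _, rfl⟩, rfl⟩
  have heval : Measurable fun ω : PathSp d => ω 0 := (continuous_eval_const 0).measurable
  have hempty : ((fun ω : PathSp d => ω 0) ∘ Subtype.val) ⁻¹' {x}ᶜ = (∅ : Set (Omega1 x)) :=
    eq_empty_of_forall_notMem fun ω hω => hω ω.2
  rw [Measure.map_map heval measurable_subtype_coe, Measure.map_apply
    (heval.comp measurable_subtype_coe) (measurableSet_singleton x).compl, hempty, measure_empty]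
  exact zero_le

lemma isTightMeasureSet_snd_Wxa (hm : m ≠ 0) (x : Ed d) :
    IsTightMeasureSet (Measure.snd '' (Wxa x m '' {0}ᶜ)) := by
  have hclosed : IsClosed {ω : PathSp d | ω 0 = x} :=
    isClosed_singleton.preimage (continuous_eval_const 0)
  refine isTightMeasureSet_of_isClosedEmbedding hclosed.isClosedEmbedding_subtypeVal
    (isTightMeasureSet_of_isKolmogorovProcess (p := 4) one_lt_two
      (M := (stdGaussianMoment (Ed d) 4 * ENNReal.ofReal (8 / m ^ 4)).toNNReal)
      (isTightMeasureSet_map_eval_zero _) ?_)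
  rintro _ ⟨_, ⟨_, ⟨a, ha, rfl⟩, rfl⟩, rfl⟩
  exact isKolmogorovProcess_Wxa hm ha x

end WalkTightness

theorem Wxa_tight_general {d : ℕ} {m : ℝ} (hm : m ≠ 0) (x : Ed d) :
    IsTightMeasureSet (Wxa x m '' {0}ᶜ) :=
  .prodMk (isTightMeasureSet_fst_Wxa hm x) (isTightMeasureSet_snd_Wxa hm x)

/-- **Lemma 4.1**: the family `{W_{x,a} : 0 < a < 1}` of probability measures on
`Γ̃(x) = [0,∞) × Ω(x)` is tight. -/
theorem Wxa_tight (d : ℕ) (hd : 1 ≤ d) (m : ℝ) (hm : 0 < m) (x : Ed d) :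
    ∀ η : ℝ, 0 < η → ∃ K : Set (ℝ × Omega1 x), IsCompact K ∧
      ∀ a : ℝ, 0 < a → a < 1 → Wxa x m a Kᶜ < ENNReal.ofReal η := by
  intro η hη
  obtain ⟨K, hK, hKη⟩ := isTightMeasureSet_iff_exists_isCompact_measure_compl_le.1
    (Wxa_tight_general hm.ne' x) (ENNReal.ofReal (η / 2)) (by positivity)
  exact ⟨K, hK, fun a ha _ => (hKη _ (mem_image_of_mem _ ha.ne')).trans_lt
    ((ENNReal.ofReal_lt_ofReal_iff hη).2 (half_lt_self hη))⟩

end
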